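/- For every integer i ≥ 1: σ^i(a²) is a positive word (a product of the letters a, b, c, d with no inverses) of length 2^{i+2} − 2, and σ^i(a²) can be written as a product of 2^{i+1} − 1 conjugates of elements of {a², b², c², d²}. In particular, σ^i(a²) ∈ N(1) for all i ≥ 1, and the normal closure of R*(∞) = R(∞) ∪ {σ^i(a²) : i ≥ 1} in F equals the normal closure N(∞) of R(∞). -/

import Mathlib

/-- The four-letter alphabet `{a, b, c, d}`. -/
inductive L4 : Type
  | a | b | c | d
  deriving DecidableEq

/-- The free group `F = F(a, b, c, d)`. -/
abbrev F4 : Type := FreeGroup L4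

def ga : F4 := FreeGroup.of L4.a
def gb : F4 := FreeGroup.of L4.b
def gc : F4 := FreeGroup.of L4.c
def gd : F4 := FreeGroup.of L4.d

/-- The endomorphism `σ` of `F(a,b,c,d)`:
`σ(a) = aca`, `σ(b) = d`, `σ(c) = b`, `σ(d) = c`. -/
def sigma : F4 →* F4 :=
  FreeGroup.lift fun x => match x with
    | L4.a => ga * gc * ga
    | L4.b => gd
    | L4.c => gb
    | L4.d => gc

/-- The Lysenok relator set
`R(∞) = {a², b², c², d², bcd} ∪ {σⁱ((ad)⁴) : i ≥ 0} ∪ {σⁱ((adacac)⁴) : i ≥ 0}`. -/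
def Rinf : Set F4 :=
  {ga ^ 2, gb ^ 2, gc ^ 2, gd ^ 2, gb * gc * gd}
    ∪ {w | ∃ i : ℕ, w = (⇑sigma)^[i] ((ga * gd) ^ 4)}
    ∪ {w | ∃ i : ℕ, w = (⇑sigma)^[i] ((ga * gd * ga * gc * ga * gc) ^ 4)}

/-- `W` is a product of `L` conjugates of elements of `R ∪ R⁻¹`. -/
def IsProdConjPM {G : Type*} [Group G] (R : Set G) (L : ℕ) (W : G) : Prop :=
  ∃ f : Fin L → G,
    (∀ j, ∃ x r, r ∈ R ∧ (f j = x * r * x⁻¹ ∨ f j = x * r⁻¹ * x⁻¹)) ∧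
    W = (List.ofFn f).prod

/-- The extended relator set `R*(∞) = R(∞) ∪ {σⁱ(a²) : i ≥ 1}`. -/
def RinfStar : Set F4 :=
  Rinf ∪ {w | ∃ i : ℕ, 1 ≤ i ∧ w = (⇑sigma)^[i] (ga ^ 2)}

/-- `N(1)`, the normal closure of `{a², b², c², d², bcd, (ad)⁴}` in `F`. -/
def N1 : Subgroup F4 :=
  Subgroup.normalClosure
    {ga ^ 2, gb ^ 2, gc ^ 2, gd ^ 2, gb * gc * gd, (ga * gd) ^ 4}

/-!
Put `u = σⁱ(a)` and let `v = σⁱ(c)`, which is again one of the letters `b, c, d`. Then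
`σⁱ⁺¹(a) = u v u`, so `σⁱ(a)` is a positive word whose length satisfies `ℓ ↦ 2ℓ + 1`. Moreover
`(u v u)² = (u v) u² (u v)⁻¹ · u v² u⁻¹ · u²`,
so the number of conjugates of squares of letters needed for `σⁱ(a²)` obeys the same recursion.

Words are counted with pointwise powers of sets: `w ∈ s ^ n` says that `w` is a product of `n`
elements of `s`, where `s` is the set of letters or the set of conjugates of their squares.
-/

open Group Subgroup
open scoped Pointwise

section Monoid

variable {M α : Type*} [Monoid M] {n : ℕ}

theorem mem_range_pow_iff_exists_list {f : α → M} {w : M} :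
    w ∈ Set.range f ^ n ↔ ∃ l : List α, w = (l.map f).prod ∧ l.length = n := by
  induction n generalizing w with
  | zero => simp +contextual [List.length_eq_zero_iff]
  | succ n ih =>
    rw [pow_succ', Set.mem_mul]
    constructor
    · rintro ⟨_, ⟨x, rfl⟩, v, hv, rfl⟩
      obtain ⟨l, rfl, hl⟩ := ih.1 hv
      exact ⟨x :: l, by simp, by simp [hl]⟩
    · rintro ⟨l, rfl, hl⟩
      obtain ⟨x, l, rfl⟩ := List.exists_cons_of_length_eq_add_one hl
      exact ⟨f x, ⟨x, rfl⟩, (l.map f).prod, ih.2 ⟨l, rfl, by simpa using hl⟩, by simp⟩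

end Monoid

section Group

variable {G : Type*} [Group G] {s t : Set G} {m n : ℕ}

theorem mem_conjugatesOfSet_pow_iff {w : G} :
    w ∈ conjugatesOfSet s ^ n ↔
      ∃ f : Fin n → G, (∀ j, ∃ x r, r ∈ s ∧ f j = x * r * x⁻¹) ∧ w = (List.ofFn f).prod := by
  have mem_iff (g : G) : g ∈ conjugatesOfSet s ↔ ∃ x r, r ∈ s ∧ g = x * r * x⁻¹ := by
    simp only [mem_conjugatesOfSet_iff, isConj_iff]
    grind
  simp only [← mem_iff, Set.mem_pow]
  constructor
  · rintro ⟨f, rfl⟩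
    exact ⟨fun j => f j, fun j => (f j).2, rfl⟩
  · rintro ⟨f, hf, rfl⟩
    exact ⟨fun j => ⟨f j, hf j⟩, rfl⟩

theorem conj_mem_conjugatesOfSet_pow {x : G} (g : G) (hx : x ∈ conjugatesOfSet s ^ n) :
    g * x * g⁻¹ ∈ conjugatesOfSet s ^ n := by
  have image_subset : MulAut.conj g '' conjugatesOfSet s ⊆ conjugatesOfSet s :=
    Set.image_subset_iff.2 fun _ => conj_mem_conjugatesOfSet
  have h := Set.mem_image_of_mem (MulAut.conj g) hx
  rw [Set.image_pow] at h
  exact Set.pow_subset_pow_left image_subset h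

theorem sq_mul_mul_self_mem_conjugatesOfSet_pow {u v : G}
    (hu : u ^ 2 ∈ conjugatesOfSet s ^ m) (hv : v ^ 2 ∈ conjugatesOfSet s ^ n) :
    (u * v * u) ^ 2 ∈ conjugatesOfSet s ^ (m + n + m) := by
  have factorization :
      (u * v * u) ^ 2 = (u * v) * u ^ 2 * (u * v)⁻¹ * (u * v ^ 2 * u⁻¹) * u ^ 2 := by
    simp only [sq]
    group
  rw [factorization, pow_add, pow_add]
  exact Set.mul_mem_mul (Set.mul_mem_mul (conj_mem_conjugatesOfSet_pow _ hu)
    (conj_mem_conjugatesOfSet_pow _ hv)) hu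

theorem conjugatesOfSet_pow_subset_normalClosure :
    conjugatesOfSet s ^ n ⊆ (normalClosure s : Set G) :=
  Subgroup.pow_subset conjugatesOfSet_subset_normalClosure

theorem normalClosure_union_eq_left (h : t ⊆ normalClosure s) :
    normalClosure (s ∪ t) = normalClosure s := by
  rw [normalClosure_union, sup_eq_left]
  exact normalClosure_le_normal h

end Group

theorem two_pow_add_two_sub_one (i : ℕ) :
    2 ^ (i + 2) - 1 = (2 ^ (i + 1) - 1) + 1 + (2 ^ (i + 1) - 1) := by
  have one_le := Nat.one_le_two_pow (n := i + 1)
  have doubling : 2 ^ (i + 2) = 2 ^ (i + 1) * 2 := pow_succ 2 (i + 1)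
  omega

/-- The squares `a², b², c², d²` of the letters, written out as in the relator sets. -/
def letterSquares : Set F4 := {ga ^ 2, gb ^ 2, gc ^ 2, gd ^ 2}

theorem of_sq_mem_letterSquares (x : L4) : FreeGroup.of x ^ 2 ∈ letterSquares := by
  cases x <;> simp [letterSquares, ga, gb, gc, gd]

theorem sigma_ga : sigma ga = ga * gc * ga :=
  FreeGroup.lift_apply_of

theorem sigma_mapsTo_bcd : Set.MapsTo sigma {gb, gc, gd} {gb, gc, gd} := by
  rintro _ (rfl | rfl | rfl) <;> simp [sigma, gb, gc, gd]

theorem sigma_iterate_gc_mem_range_of (i : ℕ) :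
    sigma^[i] gc ∈ Set.range (FreeGroup.of : L4 → F4) := by
  have bcd_subset : ({gb, gc, gd} : Set F4) ⊆ Set.range FreeGroup.of := by
    rintro _ (rfl | rfl | rfl) <;> exact Set.mem_range_self _
  exact bcd_subset (sigma_mapsTo_bcd.iterate i (by simp))

theorem sigma_iterate_succ_ga (i : ℕ) :
    sigma^[i + 1] ga = sigma^[i] ga * sigma^[i] gc * sigma^[i] ga := by
  rw [Function.iterate_succ_apply, sigma_ga, iterate_map_mul, iterate_map_mul]

theorem sigma_iterate_ga_mem_range_of_pow (i : ℕ) :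
    sigma^[i] ga ∈ Set.range (FreeGroup.of : L4 → F4) ^ (2 ^ (i + 1) - 1) := by
  induction i with
  | zero => simp [ga]
  | succ i ih =>
    rw [sigma_iterate_succ_ga, two_pow_add_two_sub_one, pow_add, pow_succ]
    exact Set.mul_mem_mul (Set.mul_mem_mul ih (sigma_iterate_gc_mem_range_of i)) ih

theorem sigma_iterate_ga_sq_mem_range_of_pow (i : ℕ) :
    sigma^[i] (ga ^ 2) ∈ Set.range (FreeGroup.of : L4 → F4) ^ (2 ^ (i + 2) - 2) := by
  have exponent : 2 ^ (i + 2) - 2 = (2 ^ (i + 1) - 1) * 2 := by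
    rw [Nat.sub_one_mul, ← pow_succ]
  rw [iterate_map_pow, exponent, pow_mul]
  exact Set.pow_mem_pow (sigma_iterate_ga_mem_range_of_pow i)

theorem sigma_iterate_ga_sq_mem_conjugatesOfSet_pow (i : ℕ) :
    sigma^[i] (ga ^ 2) ∈ conjugatesOfSet letterSquares ^ (2 ^ (i + 1) - 1) := by
  rw [iterate_map_pow]
  have of_sq_mem (x : L4) : FreeGroup.of x ^ 2 ∈ conjugatesOfSet letterSquares ^ 1 := by
    rw [pow_one]
    exact subset_conjugatesOfSet (of_sq_mem_letterSquares x)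
  induction i with
  | zero => exact of_sq_mem L4.a
  | succ i ih =>
    obtain ⟨x, hx⟩ := sigma_iterate_gc_mem_range_of i
    rw [sigma_iterate_succ_ga, two_pow_add_two_sub_one, ← hx]
    exact sq_mul_mul_self_mem_conjugatesOfSet_pow ih (of_sq_mem x)

theorem sigma_iterate_ga_sq_mem_normalClosure {s : Set F4} (hs : letterSquares ⊆ s) (i : ℕ) :
    sigma^[i] (ga ^ 2) ∈ normalClosure s :=
  normalClosure_mono hs (conjugatesOfSet_pow_subset_normalClosure
    (sigma_iterate_ga_sq_mem_conjugatesOfSet_pow i))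

theorem letterSquares_subset_Rinf : letterSquares ⊆ Rinf := by
  rintro _ (rfl | rfl | rfl | rfl) <;> simp [Rinf]

/-- for every `i ≥ 1`, `σⁱ(a²)` is a positive word of length
`2^{i+2} − 2` and is a product of `2^{i+1} − 1` conjugates of elements of
`{a², b², c², d²}`; in particular `σⁱ(a²) ∈ N(1)` and the normal closure of
`R*(∞)` equals that of `R(∞)`. -/
theorem sigma_iterate_a_squared :
    (∀ i : ℕ, 1 ≤ i →
      (∃ l : List L4, (⇑sigma)^[i] (ga ^ 2) = (l.map FreeGroup.of).prod ∧
          l.length = 2 ^ (i + 2) - 2) ∧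
      (∃ f : Fin (2 ^ (i + 1) - 1) → F4,
        (∀ j, ∃ x r, r ∈ ({ga ^ 2, gb ^ 2, gc ^ 2, gd ^ 2} : Set F4) ∧
            f j = x * r * x⁻¹) ∧
        (⇑sigma)^[i] (ga ^ 2) = (List.ofFn f).prod) ∧
      (⇑sigma)^[i] (ga ^ 2) ∈ N1) ∧
    Subgroup.normalClosure RinfStar = Subgroup.normalClosure Rinf := by
  refine ⟨fun i _ => ⟨?positive, ?conjugates, ?mem_N1⟩, ?normalClosure_eq⟩
  case positive =>
    exact mem_range_pow_iff_exists_list.1 (sigma_iterate_ga_sq_mem_range_of_pow i)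
  case conjugates =>
    exact mem_conjugatesOfSet_pow_iff.1 (sigma_iterate_ga_sq_mem_conjugatesOfSet_pow i)
  case mem_N1 =>
    refine sigma_iterate_ga_sq_mem_normalClosure ?_ i
    rintro _ (rfl | rfl | rfl | rfl) <;> simp
  case normalClosure_eq =>
    refine normalClosure_union_eq_left ?_
    rintro _ ⟨i, -, rfl⟩
    exact sigma_iterate_ga_sq_mem_normalClosure letterSquares_subset_Rinf i
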